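/- arXiv:2401.08065 — 2 statements merged into one kernel-verified Lean document; each statement's English description precedes it below -/
import Mathlib

section
/- Let ρ = |ψ⟩⟨ψ| be an n-qubit pure state, let S ⊆ Fin n be a nonempty subset with |S| = s, and fix any bitstring z : S → Fin 2. Let U = ⊗_{i∈S} U_i (acting as the identity on qubits outside S) where (U_i)_{i∈S} are independent Haar-random elements of U(2), and let P_U(z) = tr(U ρ U† · |z⟩⟨z|) where |z⟩⟨z| projects the qubits in S onto the computational basis state z and acts as the identity elsewhere. Then the concentratable entanglement satisfies C_ψ(S) = 1 − 3^s · E_U[P_U(z)²], where E_U denotes integration with respect to the product of Haar probability measures on (U(2))^S. -/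
open Matrix MeasureTheory
open scoped BigOperators ComplexConjugate Kronecker

/-- `n`-qubit operators: matrices indexed by functions `Fin n → Fin 2`. -/
abbrev QMat (n : ℕ) : Type := Matrix (Fin n → Fin 2) (Fin n → Fin 2) ℂ

/-- Combine an assignment on `α` and one on its complement into a full index. -/
noncomputable def embedIdx {n : ℕ} (α : Finset (Fin n)) (i : {x : Fin n // x ∈ α} → Fin 2)
    (k : {x : Fin n // x ∉ α} → Fin 2) : Fin n → Fin 2 :=
  fun x => if h : x ∈ α then i ⟨x, h⟩ else k ⟨x, h⟩

/-- The reduced density matrix on the qubits in `α` (partial trace over the rest). -/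
noncomputable def reduced {n : ℕ} (ρ : QMat n) (α : Finset (Fin n)) :
    Matrix ({x : Fin n // x ∈ α} → Fin 2) ({x : Fin n // x ∈ α} → Fin 2) ℂ :=
  fun i j => ∑ k : ({x : Fin n // x ∉ α} → Fin 2), ρ (embedIdx α i k) (embedIdx α j k)

/-- The concentratable entanglement `C_ψ(S) = 1 - 2^{-|S|} ∑_{α ⊆ S} tr(ρ_α²)`. -/
noncomputable def CE {n : ℕ} (ρ : QMat n) (S : Finset (Fin n)) : ℝ :=
  1 - (1 / 2 : ℝ) ^ S.card *
    ∑ α ∈ S.powerset, (Matrix.trace (reduced ρ α * reduced ρ α)).re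

/-- Tensor product of single-qubit operators on the qubits in `S`, identity elsewhere. -/
noncomputable def localOp {n : ℕ} (S : Finset (Fin n))
    (V : {i : Fin n // i ∈ S} → Matrix (Fin 2) (Fin 2) ℂ) : QMat n :=
  fun x y => ∏ i : Fin n,
    if h : i ∈ S then V ⟨i, h⟩ (x i) (y i)
    else (if x i = y i then 1 else 0)

/-- Projector onto computational basis state `z` on the qubits in `S`, identity elsewhere. -/
noncomputable def projZ {n : ℕ} (S : Finset (Fin n)) (z : {i : Fin n // i ∈ S} → Fin 2) : QMat n :=
  fun x y => ∏ i : Fin n,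
    if h : i ∈ S then (if x i = z ⟨i, h⟩ ∧ y i = z ⟨i, h⟩ then 1 else 0)
    else (if x i = y i then 1 else 0)

noncomputable instance : MeasurableSpace (Matrix.unitaryGroup (Fin 2) ℂ) := borel _
instance : BorelSpace (Matrix.unitaryGroup (Fin 2) ℂ) := ⟨rfl⟩

/-- The Born probability `P_U(z) = tr(U ρ U† |z⟩⟨z|)` of outcome `z` after the local
randomized measurement given by the single-qubit unitaries `V i`, `i ∈ S`. -/
noncomputable def born {n : ℕ} (ρ : QMat n) (S : Finset (Fin n))
    (V : {i : Fin n // i ∈ S} → Matrix.unitaryGroup (Fin 2) ℂ)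
    (z : {i : Fin n // i ∈ S} → Fin 2) : ℝ :=
  (Matrix.trace (localOp S (fun i => (V i : Matrix (Fin 2) (Fin 2) ℂ)) * ρ *
      (localOp S (fun i => (V i : Matrix (Fin 2) (Fin 2) ℂ)))ᴴ * projZ S z)).re


section UnitaryHaar

instance : CompactSpace (Matrix.unitaryGroup (Fin 2) ℂ) := by
  refine (isCompact_iff_compactSpace (s := ((Matrix.unitaryGroup (Fin 2) ℂ :) :
    Set (Matrix (Fin 2) (Fin 2) ℂ)))).mp ?_
  have hK : IsCompact (Set.univ.pi fun _ => Set.univ.pi fun _ => Metric.closedBall 0 1 :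
      Set (Matrix (Fin 2) (Fin 2) ℂ)) :=
    isCompact_univ_pi fun _ => isCompact_univ_pi fun _ => isCompact_closedBall _ _
  refine hK.of_isClosed_subset ?_ fun U hU => ?_
  · have : (Matrix.unitaryGroup (Fin 2) ℂ : Set (Matrix (Fin 2) (Fin 2) ℂ)) =
        {U | U * star U = 1} := by
      ext U
      exact Matrix.mem_unitaryGroup_iff
    rw [this]
    exact isClosed_eq (by fun_prop) continuous_const
  · simpa using entry_norm_bound_of_unitary hU

variable (μ : Measure (Matrix.unitaryGroup (Fin 2) ℂ)) [μ.IsHaarMeasure]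

theorem unitary_integral_mul_right [IsProbabilityMeasure μ] (g : Matrix.unitaryGroup (Fin 2) ℂ)
    (f : Matrix.unitaryGroup (Fin 2) ℂ → ℂ) : ∫ U, f (U * g) ∂μ = ∫ U, f U ∂μ := by
  have : IsProbabilityMeasure (μ.map (· * g)) :=
    Measure.isProbabilityMeasure_map (by fun_prop)
  have h : μ.map (· * g) = μ := Measure.isHaarMeasure_eq_of_isProbabilityMeasure _ _
  conv_rhs => rw [← h]
  exact ((MeasurableEquiv.mulRight g).measurableEmbedding.integral_map f).symm

@[fun_prop]
theorem continuous_unitary_entry (a b : Fin 2) :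
    Continuous fun U : Matrix.unitaryGroup (Fin 2) ℂ => U.1 a b :=
  (continuous_apply_apply a b).comp continuous_subtype_val

theorem unitary_integrable {f : Matrix.unitaryGroup (Fin 2) ℂ → ℂ} (hf : Continuous f) :
    Integrable f μ :=
  hf.integrable_of_hasCompactSupport (HasCompactSupport.of_compactSpace f)

variable [IsProbabilityMeasure μ]

/-- The second moment `𝔼[conj(U_{za}) U_{zb} conj(U_{zc}) U_{zd}]` of a row of `U`. -/
noncomputable def rowMoment (z a b c d : Fin 2) : ℂ :=
  ∫ U, star (U.1 z a) * U.1 z b * (star (U.1 z c) * U.1 z d) ∂μ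

/-- Right invariance of Haar measure, applied to the second moments of a row. -/
theorem rowMoment_eq_sum (g : Matrix.unitaryGroup (Fin 2) ℂ) (z a b c d : Fin 2) :
    rowMoment μ z a b c d = ∑ p, ∑ q, ∑ r, ∑ s,
      star (g.1 p a) * g.1 q b * (star (g.1 r c) * g.1 s d) * rowMoment μ z p q r s := by
  have h : rowMoment μ z a b c d = ∫ U, ∑ p, ∑ q, ∑ r, ∑ s,
      star (g.1 p a) * g.1 q b * (star (g.1 r c) * g.1 s d) *
        (star (U.1 z p) * U.1 z q * (star (U.1 z r) * U.1 z s)) ∂μ := by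
    rw [rowMoment, ← unitary_integral_mul_right μ g]
    congr 1 with U
    simp only [Submonoid.coe_mul, Matrix.mul_apply, Fin.sum_univ_two, star_add, star_mul']
    ring
  rw [h]
  simp only [rowMoment, ← integral_const_mul]
  rw [integral_finsetSum _ fun _ _ => unitary_integrable μ (by fun_prop)]
  refine Finset.sum_congr rfl fun p _ => ?_
  rw [integral_finsetSum _ fun _ _ => unitary_integrable μ (by fun_prop)]
  refine Finset.sum_congr rfl fun q _ => ?_
  rw [integral_finsetSum _ fun _ _ => unitary_integrable μ (by fun_prop)]
  refine Finset.sum_congr rfl fun r _ => ?_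
  rw [integral_finsetSum _ fun _ _ => unitary_integrable μ (by fun_prop)]

theorem sum_rowMoment (z : Fin 2) : ∑ a, ∑ c, rowMoment μ z a a c c = 1 := by
  have hint (a c : Fin 2) : Integrable (fun U : Matrix.unitaryGroup (Fin 2) ℂ =>
      star (U.1 z a) * U.1 z a * (star (U.1 z c) * U.1 z c)) μ :=
    unitary_integrable μ (by fun_prop)
  simp_rw [rowMoment, ← integral_finsetSum _ fun c _ => hint _ c]
  rw [← integral_finsetSum _ fun _ _ => integrable_finsetSum _ fun c _ => hint _ c]
  have h (U : Matrix.unitaryGroup (Fin 2) ℂ) :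
      ∑ a, ∑ c, star (U.1 z a) * U.1 z a * (star (U.1 z c) * U.1 z c) = 1 := by
    have hU := congr_fun₂ (Matrix.mem_unitaryGroup_iff.mp U.2) z z
    simp only [Matrix.mul_apply, Matrix.star_apply, Fin.sum_univ_two, Matrix.one_apply_eq] at hU ⊢
    linear_combination (U.1 z 0 * star (U.1 z 0) + U.1 z 1 * star (U.1 z 1) + 1) * hU
  simp only [h, integral_const, probReal_univ, one_smul]

theorem rowMoment_eq (z a b c d : Fin 2) :
    rowMoment μ z a b c d =
      ((if a = b ∧ c = d then 1 else 0) + (if a = d ∧ c = b then 1 else 0)) / 6 := by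
  have hphase : (!![1, 0; 0, Complex.I] : Matrix (Fin 2) (Fin 2) ℂ) ∈
      Matrix.unitaryGroup (Fin 2) ℂ := by
    rw [Matrix.mem_unitaryGroup_iff]
    ext i j
    fin_cases i <;> fin_cases j <;> simp [Matrix.mul_apply]
  have hrot : (!![3 / 5, 4 / 5; -4 / 5, 3 / 5] : Matrix (Fin 2) (Fin 2) ℂ) ∈
      Matrix.unitaryGroup (Fin 2) ℂ := by
    rw [Matrix.mem_unitaryGroup_iff]
    ext i j
    fin_cases i <;> fin_cases j <;> simp [Matrix.mul_apply, Complex.conj_ofNat] <;> norm_num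
  have hswap : (!![0, 1; 1, 0] : Matrix (Fin 2) (Fin 2) ℂ) ∈
      Matrix.unitaryGroup (Fin 2) ℂ := by
    rw [Matrix.mem_unitaryGroup_iff]
    ext i j
    fin_cases i <;> fin_cases j <;> simp [Matrix.mul_apply]
  have phase := rowMoment_eq_sum μ ⟨_, hphase⟩ z
  have rot := rowMoment_eq_sum μ ⟨_, hrot⟩ z 0 0 0 0
  have swap := rowMoment_eq_sum μ ⟨_, hswap⟩ z 0 0 0 0
  have norm := sum_rowMoment μ z
  have comm₁ (a b c d : Fin 2) : rowMoment μ z c d a b = rowMoment μ z a b c d := by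
    simp only [rowMoment, mul_comm]
  have comm₂ (a b c d : Fin 2) : rowMoment μ z a d c b = rowMoment μ z a b c d := by
    simp only [rowMoment, mul_comm, mul_left_comm, mul_assoc]
  have h₁ := comm₁ 0 0 1 1
  have h₂ := comm₂ 0 0 1 1
  have h₃ := comm₂ 1 1 0 0
  simp [Fin.sum_univ_two, Complex.conj_ofNat] at phase rot swap norm
  have hI (x : ℂ) : x = Complex.I * x ↔ x = 0 := by
    refine ⟨fun h => ?_, fun h => by simp [h]⟩
    linear_combination (1 + Complex.I) / 2 * h + x / 2 * Complex.I_sq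
  have hI' (x : ℂ) : x = -(Complex.I * x) ↔ x = 0 := by
    refine ⟨fun h => ?_, fun h => by simp [h]⟩
    linear_combination (1 - Complex.I) / 2 * h + x / 2 * Complex.I_sq
  simp only [hI, hI', self_eq_neg] at phase
  obtain ⟨⟨⟨p₁, p₂⟩, ⟨p₃, p₄⟩, p₅⟩, ⟨p₆, p₇, p₈⟩, p₉, p₁₀⟩ := phase
  rw [p₁, p₂, p₃, p₄, p₅, p₆, p₇, p₈, p₉, p₁₀, h₃, h₂, h₁, ← swap] at rot
  rw [h₁, ← swap] at norm
  have hB : rowMoment μ z 0 0 1 1 = 1 / 6 := by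
    linear_combination (1 / 6) * norm - (625 / 864) * rot
  have hA : rowMoment μ z 0 0 0 0 = 1 / 3 := by linear_combination norm / 2 - hB
  fin_cases a <;> fin_cases b <;> fin_cases c <;> fin_cases d <;>
    simp [p₁, p₂, p₃, p₄, p₅, p₆, p₇, p₈, p₉, p₁₀, h₃, h₂, h₁, hA, hB, ← swap] <;> norm_num

end UnitaryHaar

section TensorOperators

variable {n : ℕ}

/-- The tensor product of single-qubit operators. -/
noncomputable def tensorOp (a : Fin n → Matrix (Fin 2) (Fin 2) ℂ) : QMat n :=
  fun x y => ∏ i, a i (x i) (y i)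

theorem tensorOp_mul (a b : Fin n → Matrix (Fin 2) (Fin 2) ℂ) :
    tensorOp a * tensorOp b = tensorOp fun i => a i * b i := by
  ext x y
  simp only [Matrix.mul_apply, tensorOp, ← Finset.prod_mul_distrib]
  rw [Finset.prod_univ_sum, Fintype.piFinset_univ]

theorem tensorOp_conjTranspose (a : Fin n → Matrix (Fin 2) (Fin 2) ℂ) :
    (tensorOp a)ᴴ = tensorOp fun i => (a i)ᴴ := by
  ext x y
  simp [tensorOp, Matrix.conjTranspose_apply]

variable (S : Finset (Fin n)) (V : {i : Fin n // i ∈ S} → Matrix.unitaryGroup (Fin 2) ℂ)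
  (z : {i : Fin n // i ∈ S} → Fin 2)

/-- The single-qubit measurement effect `Uᵢ† |zᵢ⟩⟨zᵢ| Uᵢ`, or the identity for `i ∉ S`. -/
noncomputable def effect (i : Fin n) : Matrix (Fin 2) (Fin 2) ℂ :=
  fun a b => if h : i ∈ S then
    star ((V ⟨i, h⟩).1 (z ⟨i, h⟩) a) * (V ⟨i, h⟩).1 (z ⟨i, h⟩) b
  else if a = b then 1 else 0

theorem effect_isHermitian (i : Fin n) : (effect S V z i).IsHermitian := by
  ext a b
  by_cases h : i ∈ S
  · simp [effect, h, mul_comm]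
  · by_cases hab : a = b <;> simp [effect, h, hab, Ne.symm]

theorem conj_projZ_eq_tensorOp_effect :
    (localOp S fun i => (V i : Matrix (Fin 2) (Fin 2) ℂ))ᴴ * projZ S z *
      localOp S (fun i => (V i : Matrix (Fin 2) (Fin 2) ℂ)) = tensorOp (effect S V z) := by
  have hL : localOp S (fun i => (V i : Matrix (Fin 2) (Fin 2) ℂ)) =
      tensorOp fun i => if h : i ∈ S then (V ⟨i, h⟩).1 else 1 := by
    ext x y
    refine Finset.prod_congr rfl fun i _ => ?_
    by_cases h : i ∈ S
    · simp [h]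
    · simp [h, Matrix.one_apply]
  have hP : projZ S z = tensorOp fun i =>
      if h : i ∈ S then Matrix.single (z ⟨i, h⟩) (z ⟨i, h⟩) 1 else 1 := by
    ext x y
    refine Finset.prod_congr rfl fun i _ => ?_
    by_cases h : i ∈ S
    · simp [h, Matrix.single_apply, eq_comm]
    · simp [h, Matrix.one_apply]
  rw [hL, hP, tensorOp_conjTranspose, tensorOp_mul, tensorOp_mul]
  congr 1
  ext i a b
  by_cases h : i ∈ S
  · simp [effect, h, Matrix.mul_apply, Matrix.single_apply, ite_and]
  · simp [effect, h, Matrix.one_apply]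

theorem born_eq_sum {ρ : QMat n} (hρ : ρ.IsHermitian) :
    (born ρ S V z : ℂ) = ∑ x, ∑ y, ρ x y * ∏ i, effect S V z i (y i) (x i) := by
  set M := tensorOp (effect S V z)
  have hM : M.IsHermitian := by
    rw [Matrix.IsHermitian, tensorOp_conjTranspose]
    congr 1
    ext1 i
    exact effect_isHermitian S V z i
  have htr : born ρ S V z = (ρ * M).trace.re := by
    rw [born, show M = _ from (conj_projZ_eq_tensorOp_effect S V z).symm, Matrix.mul_assoc,
      Matrix.mul_assoc, Matrix.trace_mul_comm, Matrix.mul_assoc]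
  have hreal : star (ρ * M).trace = (ρ * M).trace := by
    rw [← Matrix.trace_conjTranspose, Matrix.conjTranspose_mul, hρ.eq, hM.eq,
      Matrix.trace_mul_comm]
  rw [htr, Complex.conj_eq_iff_re.mp hreal]
  rfl

theorem born_sq_eq_sum {ρ : QMat n} (hρ : ρ.IsHermitian) :
    ((born ρ S V z ^ 2 : ℝ) : ℂ) = ∑ x, ∑ y, ∑ x', ∑ y', ρ x y * ρ x' y' *
      ∏ i, (effect S V z i (y i) (x i) * effect S V z i (y' i) (x' i)) := by
  rw [Complex.ofReal_pow, born_eq_sum S V z hρ, sq]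
  simp only [Finset.sum_mul, Finset.mul_sum, Finset.prod_mul_distrib]
  refine Finset.sum_congr rfl fun x _ => Finset.sum_congr rfl fun y _ =>
    Finset.sum_congr rfl fun x' _ => Finset.sum_congr rfl fun y' _ => ?_
  ring

end TensorOperators

section Purity

variable {n : ℕ} (α : Finset (Fin n))

theorem sum_eq_sum_embedIdx (F : (Fin n → Fin 2) → ℂ) :
    ∑ x, F x = ∑ i, ∑ k, F (embedIdx α i k) := by
  rw [← Fintype.sum_prod_type']
  exact Fintype.sum_equiv (Equiv.piEquivPiSubtypeProd (· ∈ α) fun _ => Fin 2) _ _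
    fun x => congrArg F ((Equiv.piEquivPiSubtypeProd (· ∈ α) fun _ => Fin 2).left_inv x).symm

/-- The matrix element of the operator exchanging the two copies of the qubits in `α`. -/
noncomputable def swapElem (x y x' y' : Fin n → Fin 2) : ℂ :=
  ∏ i, if i ∈ α then (if y i = x' i ∧ y' i = x i then 1 else 0)
    else (if y i = x i ∧ y' i = x' i then 1 else 0)

theorem swapElem_eq (x y x' y' : Fin n → Fin 2) :
    swapElem α x y x' y' =
      if y = α.piecewise x' x then (if y' = α.piecewise x x' then 1 else 0) else 0 := by
  rw [← ite_and]
  have (i : Fin n) : (if i ∈ α then (if y i = x' i ∧ y' i = x i then 1 else 0)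
      else (if y i = x i ∧ y' i = x' i then 1 else 0) : ℂ) =
      if y i = α.piecewise x' x i ∧ y' i = α.piecewise x x' i then 1 else 0 := by
    by_cases h : i ∈ α <;> simp [h]
  simp only [swapElem, this, Finset.prod_ite_zero, Finset.prod_const_one, Finset.mem_univ,
    true_imp_iff, forall_and, funext_iff]

theorem trace_reduced_sq (ρ : QMat n) :
    (reduced ρ α * reduced ρ α).trace =
      ∑ x, ∑ y, ∑ x', ∑ y', ρ x y * ρ x' y' * swapElem α x y x' y' := by
  have h (x : Fin n → Fin 2) : ∑ y, ∑ x', ∑ y', ρ x y * ρ x' y' * swapElem α x y x' y' =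
      ∑ x', ρ x (α.piecewise x' x) * ρ x' (α.piecewise x x') := by
    rw [Finset.sum_comm]
    refine Finset.sum_congr rfl fun x' _ => ?_
    simp [swapElem_eq]
  have hp (i j k l) : α.piecewise (embedIdx α i k) (embedIdx α j l) = embedIdx α i l := by
    ext a
    by_cases ha : a ∈ α <;> simp [embedIdx, ha]
  simp only [h]
  rw [sum_eq_sum_embedIdx α]
  simp only [sum_eq_sum_embedIdx α fun x' => ρ _ (α.piecewise x' _) * _, hp, Matrix.trace,
    Matrix.diag_apply, Matrix.mul_apply, reduced, Finset.sum_mul_sum]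
  refine Finset.sum_congr rfl fun i _ => ?_
  rw [Finset.sum_comm]

end Purity

section Integration

variable {n : ℕ} (S : Finset (Fin n)) (z : {i : Fin n // i ∈ S} → Fin 2)
  (μ : Measure (Matrix.unitaryGroup (Fin 2) ℂ)) [μ.IsHaarMeasure]

theorem prod_effect_mul_effect (x y x' y' : Fin n → Fin 2)
    (V : {i : Fin n // i ∈ S} → Matrix.unitaryGroup (Fin 2) ℂ) :
    ∏ i, (effect S V z i (y i) (x i) * effect S V z i (y' i) (x' i)) =
      (∏ i : {i : Fin n // i ∈ S},
        (star ((V i).1 (z i) (y i)) * (V i).1 (z i) (x i) *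
          (star ((V i).1 (z i) (y' i)) * (V i).1 (z i) (x' i)))) *
      ∏ i ∈ Sᶜ, if y i = x i ∧ y' i = x' i then 1 else 0 := by
  rw [← Finset.prod_mul_prod_compl S, ← Finset.prod_coe_sort S]
  congr 1
  · refine Finset.prod_congr rfl fun i _ => ?_
    simp [effect]
  · refine Finset.prod_congr rfl fun i hi => ?_
    simp only [effect, Finset.mem_compl.mp hi, dite_false, ite_and]
    split_ifs <;> simp

theorem integrable_prod_effect (x y x' y' : Fin n → Fin 2) :
    Integrable (fun V : {i : Fin n // i ∈ S} → Matrix.unitaryGroup (Fin 2) ℂ =>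
      ∏ i, (effect S V z i (y i) (x i) * effect S V z i (y' i) (x' i)))
      (Measure.pi fun _ => μ) := by
  simp only [prod_effect_mul_effect]
  refine Integrable.mul_const ?_ _
  exact Integrable.fintype_prod (f := fun (i : {i : Fin n // i ∈ S})
    (U : Matrix.unitaryGroup (Fin 2) ℂ) => star (U.1 (z i) (y i)) * U.1 (z i) (x i) *
      (star (U.1 (z i) (y' i)) * U.1 (z i) (x' i))) fun i => unitary_integrable μ (by fun_prop)

variable [IsProbabilityMeasure μ]

/-- Averaging over local unitaries produces the uniform mixture of the partial swaps. -/
theorem integral_prod_effect (x y x' y' : Fin n → Fin 2) :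
    ∫ V : {i : Fin n // i ∈ S} → Matrix.unitaryGroup (Fin 2) ℂ,
      ∏ i, (effect S V z i (y i) (x i) * effect S V z i (y' i) (x' i))
        ∂(Measure.pi fun _ => μ) =
      (1 / 6) ^ S.card * ∑ α ∈ S.powerset, swapElem α x y x' y' := by
  simp only [prod_effect_mul_effect]
  rw [integral_mul_const, integral_fintype_prod_eq_prod (fun (i : {i : Fin n // i ∈ S})
    (U : Matrix.unitaryGroup (Fin 2) ℂ) => star (U.1 (z i) (y i)) * U.1 (z i) (x i) *
      (star (U.1 (z i) (y' i)) * U.1 (z i) (x' i)))]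
  have hm (i : {i : Fin n // i ∈ S}) := rowMoment_eq μ (z i) (y i) (x i) (y' i) (x' i)
  simp only [rowMoment] at hm
  simp only [hm]
  rw [Finset.prod_coe_sort S fun i => (((if y i = x i ∧ y' i = x' i then 1 else 0) +
    (if y i = x' i ∧ y' i = x i then 1 else 0)) / 6 : ℂ)]
  simp only [div_eq_mul_inv, one_mul]
  rw [Finset.prod_mul_distrib, Finset.prod_const, mul_comm (∏ i ∈ S, _), mul_assoc]
  congr 1
  rw [Finset.prod_congr rfl fun i _ => add_comm _ _, Finset.prod_add, Finset.sum_mul]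
  refine Finset.sum_congr rfl fun α hα => ?_
  rw [Finset.mem_powerset] at hα
  rw [swapElem, ← Finset.prod_mul_prod_compl α, mul_assoc]
  congr 1
  · exact Finset.prod_congr rfl fun i hi => by simp [hi]
  · rw [← Finset.prod_union]
    · refine Finset.prod_congr ?_ fun i hi => ?_
      · ext i
        simp only [Finset.mem_union, Finset.mem_sdiff, Finset.mem_compl]
        have := @hα i
        tauto
      · simp [Finset.mem_compl.mp hi]
    · exact Finset.disjoint_of_subset_left Finset.sdiff_subset disjoint_compl_right

/-- The second moment of the outcome probability is an average of subsystem purities. -/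
theorem integral_born_sq {ρ : QMat n} (hρ : ρ.IsHermitian) :
    ((∫ V, born ρ S V z ^ 2 ∂(Measure.pi fun _ : {i : Fin n // i ∈ S} => μ) : ℝ) : ℂ) =
      (1 / 6) ^ S.card * ∑ α ∈ S.powerset, (reduced ρ α * reduced ρ α).trace := by
  have hint (x y x' y' : Fin n → Fin 2) :=
    (integrable_prod_effect S z μ x y x' y').const_mul (ρ x y * ρ x' y')
  rw [← integral_complex_ofReal]
  simp only [born_sq_eq_sum S _ z hρ, trace_reduced_sq]
  rw [Finset.sum_comm, Finset.mul_sum, integral_finsetSum _ fun x _ =>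
    integrable_finsetSum _ fun y _ => integrable_finsetSum _ fun x' _ =>
      integrable_finsetSum _ fun y' _ => hint x y x' y']
  refine Finset.sum_congr rfl fun x _ => ?_
  rw [Finset.sum_comm, Finset.mul_sum, integral_finsetSum _ fun y _ =>
    integrable_finsetSum _ fun x' _ => integrable_finsetSum _ fun y' _ => hint x y x' y']
  refine Finset.sum_congr rfl fun y _ => ?_
  rw [Finset.sum_comm, Finset.mul_sum, integral_finsetSum _ fun x' _ =>
    integrable_finsetSum _ fun y' _ => hint x y x' y']
  refine Finset.sum_congr rfl fun x' _ => ?_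
  rw [Finset.sum_comm, Finset.mul_sum, integral_finsetSum _ fun y' _ => hint x y x' y']
  refine Finset.sum_congr rfl fun y' _ => ?_
  rw [integral_const_mul, integral_prod_effect, ← Finset.mul_sum]
  ring

end Integration

/-- **CEs via LRMs (single bitstring)**: for any fixed bitstring `z`,
`C_ψ(S) = 1 - 3^s 𝔼_U[P_U(z)²]`, where the expectation is over independent Haar-random
single-qubit unitaries on the qubits in `S`. -/
theorem CE_eq_LRM_single_string (n : ℕ) (ψ : (Fin n → Fin 2) → ℂ)
    (hψ : (∑ x, star (ψ x) * ψ x) = 1)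
    (S : Finset (Fin n)) (hS : S.Nonempty) (z : {i : Fin n // i ∈ S} → Fin 2)
    (μ : Measure (Matrix.unitaryGroup (Fin 2) ℂ)) [μ.IsHaarMeasure] [IsProbabilityMeasure μ] :
    CE (Matrix.vecMulVec ψ (star ψ)) S
      = 1 - (3 : ℝ) ^ S.card *
        ∫ V : ({i : Fin n // i ∈ S} → Matrix.unitaryGroup (Fin 2) ℂ),
          (born (Matrix.vecMulVec ψ (star ψ)) S V z) ^ 2
          ∂(Measure.pi fun _ : {i : Fin n // i ∈ S} => μ) := by
  have hρ : (Matrix.vecMulVec ψ (star ψ)).IsHermitian := by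
    ext x y
    simp [Matrix.vecMulVec_apply, mul_comm]
  have h := congrArg Complex.re (integral_born_sq S z μ hρ)
  have hc : ((1 / 6 : ℂ)) ^ S.card = (((1 / 6 : ℝ) ^ S.card : ℝ) : ℂ) := by push_cast; rfl
  rw [Complex.ofReal_re, hc, Complex.re_ofReal_mul, Complex.re_sum] at h
  rw [CE, h, ← mul_assoc, ← mul_pow]
  norm_num
end

section
/- Let ρ = |ψ⟩⟨ψ| be an n-qubit pure state and S ⊆ Fin n nonempty with |S| = s. With U = ⊗_{i∈S} U_i a product of independent Haar-random elements of U(2) and P_U(z) = tr(U ρ U† |z⟩⟨z|), the averaged sum of squared outcome probabilities satisfies P₂ := E_U[Σ_{z ∈ {0,1}^S} P_U(z)²] ≤ (2/3)^s. Consequently, the single-unitary estimator Ĉ_l^(2) = 1 − (3/2)^s · 1{Z_{l,1} = Z_{l,2}} (with Z_{l,1}, Z_{l,2} i.i.d. with law P_{U_l} conditionally on U_l) has variance Var[Ĉ_l^(2)] = (9/4)^s · P₂(1 − P₂) ≤ (3/2)^s. -/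
open Matrix MeasureTheory
open scoped BigOperators ComplexConjugate Kronecker

/-- The Born distribution on outcome strings, as a measure. -/
noncomputable def bornMeasure {n : ℕ} (ρ : QMat n) (S : Finset (Fin n))
    (V : {i : Fin n // i ∈ S} → Matrix.unitaryGroup (Fin 2) ℂ) :
    Measure ({i : Fin n // i ∈ S} → Fin 2) :=
  ∑ z : ({i : Fin n // i ∈ S} → Fin 2), ENNReal.ofReal (born ρ S V z) • Measure.dirac z

/-- Joint law of one round of the LRM experiment: a tuple of Haar-random single-qubit
unitaries together with `K` conditionally i.i.d. Born-distributed outcomes. -/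
noncomputable def jointRound {n : ℕ} (μ : Measure (Matrix.unitaryGroup (Fin 2) ℂ))
    (ρ : QMat n) (S : Finset (Fin n)) (K : ℕ) :
    Measure (({i : Fin n // i ∈ S} → Matrix.unitaryGroup (Fin 2) ℂ) ×
      (Fin K → ({i : Fin n // i ∈ S} → Fin 2))) :=
  (Measure.pi fun _ : {i : Fin n // i ∈ S} => μ).bind
    (fun V => (Measure.pi fun _ : Fin K => bornMeasure ρ S V).map (Prod.mk V))

section Haar

instance inst_s8 : CompactSpace (Matrix.unitaryGroup (Fin 2) ℂ) := by
  refine (isCompact_iff_compactSpace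
    (s := (Matrix.unitaryGroup (Fin 2) ℂ : Set (Matrix (Fin 2) (Fin 2) ℂ)))).mp ?_
  refine IsCompact.of_isClosed_subset (isCompact_univ_pi fun _ : Fin 2 =>
    isCompact_univ_pi fun _ : Fin 2 => isCompact_closedBall (0 : ℂ) 1) ?_ ?_
  · exact isClosed_unitary
  · intro U hU i _ j _
    simpa using entry_norm_bound_of_unitary hU i j

lemma continuous_unitaryGroup_apply (i j : Fin 2) :
    Continuous fun U : Matrix.unitaryGroup (Fin 2) ℂ => (U : Matrix (Fin 2) (Fin 2) ℂ) i j :=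
  (continuous_apply_apply i j).comp continuous_subtype_val

variable (μ : Measure (Matrix.unitaryGroup (Fin 2) ℂ))

/-- A Haar probability measure on `U(2)` is right invariant. -/
lemma integral_comp_mul_right [μ.IsHaarMeasure] [IsProbabilityMeasure μ]
    {f : Matrix.unitaryGroup (Fin 2) ℂ → ℂ} (hf : Continuous f)
    (W : Matrix.unitaryGroup (Fin 2) ℂ) : ∫ U, f (U * W) ∂μ = ∫ U, f U ∂μ := by
  have hW : Continuous (· * W) := continuous_mul_const W
  have : IsProbabilityMeasure (μ.map (· * W)) :=
    Measure.isProbabilityMeasure_map hW.measurable.aemeasurable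
  have h := Measure.isHaarMeasure_eq_of_isProbabilityMeasure (μ.map (· * W)) μ
  conv_rhs => rw [← h]
  rw [integral_map hW.measurable.aemeasurable hf.aestronglyMeasurable]

/-- The second-moment integrand built from row `z` of `U`. -/
noncomputable def rowMonomial (z a b c d : Fin 2) (U : Matrix.unitaryGroup (Fin 2) ℂ) : ℂ :=
  (U : Matrix (Fin 2) (Fin 2) ℂ) z a * (U : Matrix (Fin 2) (Fin 2) ℂ) z b *
    (star ((U : Matrix (Fin 2) (Fin 2) ℂ) z c) * star ((U : Matrix (Fin 2) (Fin 2) ℂ) z d))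

lemma continuous_rowMonomial (z a b c d : Fin 2) : Continuous (rowMonomial z a b c d) := by
  unfold rowMonomial
  have h := continuous_unitaryGroup_apply z
  exact ((h a).mul (h b)).mul ((h c).star.mul (h d).star)

lemma integrable_rowMonomial [IsFiniteMeasure μ] (z a b c d : Fin 2) : Integrable (rowMonomial z a b c d) μ :=
  (continuous_rowMonomial z a b c d).integrable_of_hasCompactSupport
    (HasCompactSupport.of_compactSpace _)

variable [μ.IsHaarMeasure] [IsProbabilityMeasure μ]

/-- Changing variables by right multiplication with `W` in a row moment. -/
lemma integral_rowMonomial_eq_sum (W : Matrix.unitaryGroup (Fin 2) ℂ) (z a b c d : Fin 2) :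
    ∫ U, rowMonomial z a b c d U ∂μ =
      ∑ a', ∑ b', ∑ c', ∑ d', (W : Matrix (Fin 2) (Fin 2) ℂ) a' a *
        (W : Matrix (Fin 2) (Fin 2) ℂ) b' b * (star ((W : Matrix (Fin 2) (Fin 2) ℂ) c' c) *
        star ((W : Matrix (Fin 2) (Fin 2) ℂ) d' d)) * ∫ U, rowMonomial z a' b' c' d' U ∂μ := by
  rw [← integral_comp_mul_right μ (continuous_rowMonomial z a b c d) W]
  simp_rw [← integral_const_mul]
  have hi := fun a' b' c' d' => (integrable_rowMonomial μ z a' b' c' d').const_mul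
    ((W : Matrix (Fin 2) (Fin 2) ℂ) a' a * (W : Matrix (Fin 2) (Fin 2) ℂ) b' b *
      (star ((W : Matrix (Fin 2) (Fin 2) ℂ) c' c) * star ((W : Matrix (Fin 2) (Fin 2) ℂ) d' d)))
  simp_rw [← integral_finsetSum Finset.univ (fun d' _ => hi _ _ _ d')]
  simp_rw [← integral_finsetSum Finset.univ (fun c' _ => integrable_finsetSum Finset.univ
    (fun d' _ => hi _ _ c' d'))]
  simp_rw [← integral_finsetSum Finset.univ (fun b' _ => integrable_finsetSum Finset.univ
    (fun c' _ => integrable_finsetSum Finset.univ (fun d' _ => hi _ b' c' d')))]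
  rw [← integral_finsetSum Finset.univ (fun a' _ => integrable_finsetSum Finset.univ
    (fun b' _ => integrable_finsetSum Finset.univ (fun c' _ =>
      integrable_finsetSum Finset.univ (fun d' _ => hi a' b' c' d'))))]
  congr 1
  ext U
  simp only [rowMonomial, Matrix.UnitaryGroup.mul_val, Matrix.mul_apply, Fin.sum_univ_two,
    star_add, star_mul']
  ring

/-- Haar second moments of a row of `U`: up to normalization, the projector onto the symmetric
subspace of two qubits. -/
lemma integral_rowMonomial (z a b c d : Fin 2) :
    ∫ U, rowMonomial z a b c d U ∂μ =
      ((if a = c ∧ b = d then 1 else 0) + (if a = d ∧ b = c then 1 else 0)) / 6 := by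
  let D : Matrix.unitaryGroup (Fin 2) ℂ := ⟨!![1, 0; 0, Complex.I], by
    rw [Matrix.mem_unitaryGroup_iff]
    ext i j
    fin_cases i <;> fin_cases j <;> simp [Matrix.mul_apply, Fin.sum_univ_two, Matrix.star_apply]⟩
  let R : Matrix.unitaryGroup (Fin 2) ℂ := ⟨!![3 / 5, -(4 / 5); 4 / 5, 3 / 5], by
    rw [Matrix.mem_unitaryGroup_iff]
    ext i j
    fin_cases i <;> fin_cases j <;>
      simp [Matrix.mul_apply, Fin.sum_univ_two, Matrix.star_apply, Complex.conj_ofNat] <;>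
      norm_num⟩
  have hD := integral_rowMonomial_eq_sum μ D z
  have hR := integral_rowMonomial_eq_sum μ R z
  have hone : ∫ U, rowMonomial z 0 0 0 0 U ∂μ + 2 * ∫ U, rowMonomial z 0 1 0 1 U ∂μ
      + ∫ U, rowMonomial z 1 1 1 1 U ∂μ = 1 := by
    have hsum : ∫ U, ((rowMonomial z 0 0 0 0 U + 2 * rowMonomial z 0 1 0 1 U) +
        rowMonomial z 1 1 1 1 U) ∂μ = 1 := by
      rw [show (1 : ℂ) = ∫ _, (1 : ℂ) ∂μ by simp]
      congr 1
      ext U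
      have hU := congrFun (congrFun (Matrix.mem_unitaryGroup_iff.mp U.2) z) z
      simp only [Matrix.mul_apply, Fin.sum_univ_two, Matrix.star_apply, Matrix.one_apply_eq] at hU
      simp only [rowMonomial]
      linear_combination ((U : Matrix (Fin 2) (Fin 2) ℂ) z 0 *
        star ((U : Matrix (Fin 2) (Fin 2) ℂ) z 0) + (U : Matrix (Fin 2) (Fin 2) ℂ) z 1 *
        star ((U : Matrix (Fin 2) (Fin 2) ℂ) z 1) + 1) * hU
    have h01 := (integrable_rowMonomial μ z 0 1 0 1).const_mul 2
    have h02 : Integrable (fun U => rowMonomial z 0 0 0 0 U + 2 * rowMonomial z 0 1 0 1 U) μ :=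
      (integrable_rowMonomial μ z 0 0 0 0).add h01
    rwa [integral_add h02 (integrable_rowMonomial μ z 1 1 1 1),
      integral_add (integrable_rowMonomial μ z 0 0 0 0) h01, integral_const_mul] at hsum
  have hcomm₁ : ∀ a b c d, ∫ U, rowMonomial z a b c d U ∂μ = ∫ U, rowMonomial z b a c d U ∂μ := by
    intro a b c d
    congr 1; ext U; simp only [rowMonomial]; ring
  have hcomm₂ : ∀ a b c d, ∫ U, rowMonomial z a b c d U ∂μ = ∫ U, rowMonomial z a b d c U ∂μ := by
    intro a b c d
    congr 1; ext U; simp only [rowMonomial]; ring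
  obtain ⟨m, hm⟩ : ∃ m : Fin 2 → Fin 2 → Fin 2 → Fin 2 → ℂ,
      ∀ a b c d, ∫ U, rowMonomial z a b c d U ∂μ = m a b c d := ⟨_, fun _ _ _ _ => rfl⟩
  simp only [hm] at *
  have hphase : ∀ {x t : ℂ}, t ≠ 1 → x = t * x → x = 0 := fun ht hx => by
    by_contra h0
    exact ht (mul_right_cancel₀ h0 (by rw [one_mul]; exact hx.symm))
  have hzero : ∀ a b c d, (D.1 a a * D.1 b b * (star (D.1 c c) * star (D.1 d d))) ≠ 1 →
      m a b c d = 0 := by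
    intro a b c d h
    refine hphase h ((hD a b c d).trans ?_)
    fin_cases a <;> fin_cases b <;> fin_cases c <;> fin_cases d <;>
      simp [D, Fin.sum_univ_two]
  have z1 : m 0 0 0 1 = 0 := hzero _ _ _ _ (by simp [D, Complex.ext_iff])
  have z2 : m 0 0 1 1 = 0 := hzero _ _ _ _ (by simp [D, Complex.ext_iff]; norm_num)
  have z3 : m 0 1 0 0 = 0 := hzero _ _ _ _ (by simp [D, Complex.ext_iff])
  have z4 : m 0 1 1 1 = 0 := hzero _ _ _ _ (by simp [D, Complex.ext_iff])
  have z5 : m 1 1 0 0 = 0 := hzero _ _ _ _ (by simp [D, Complex.ext_iff]; norm_num)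
  have z6 : m 1 1 0 1 = 0 := hzero _ _ _ _ (by simp [D, Complex.ext_iff])
  have c1 := hcomm₁ 1 0
  have c2 := fun a b => hcomm₂ a b 1 0
  have hR0 := hR 0 0 0 0
  have hR1 := hR 1 1 1 1
  simp only [Fin.sum_univ_two, c1, c2, z1, z2, z3, z4, z5, z6] at hR0 hR1
  simp [R] at hR0 hR1
  have hpq : m 0 0 0 0 = m 1 1 1 1 := by linear_combination 25 / 32 * (hR0 - hR1)
  have hpr : m 0 0 0 0 = 2 * m 0 1 0 1 := by linear_combination (425 * hR0 + 200 * hR1) / 288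
  have e0 : m 0 0 0 0 = 1 / 3 := by linear_combination (hone + hpr + hpq) / 3
  have e1 : m 1 1 1 1 = 1 / 3 := hpq.symm.trans e0
  have e2 : m 0 1 0 1 = 1 / 6 := by linear_combination (e0 - hpr) / 2
  fin_cases a <;> fin_cases b <;> fin_cases c <;> fin_cases d <;>
    simp [c1, c2, z1, z2, z3, z4, z5, z6, e0, e1, e2] <;> norm_num

end Haar

section TensorProduct

variable {ι κ : Type*} [Fintype ι] [DecidableEq ι] [Fintype κ] [DecidableEq κ]

/-- The tensor product of a finite family of matrices. -/
def tensorFamily (A : ι → Matrix κ κ ℂ) : Matrix (ι → κ) (ι → κ) ℂ :=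
  fun x y => ∏ i, A i (x i) (y i)

omit [DecidableEq κ] in
lemma tensorFamily_mul (A B : ι → Matrix κ κ ℂ) :
    tensorFamily A * tensorFamily B = tensorFamily fun i => A i * B i := by
  ext x y
  simp only [Matrix.mul_apply, tensorFamily, Finset.prod_univ_sum, Fintype.piFinset_univ,
    Finset.prod_mul_distrib]

omit [DecidableEq ι] [Fintype κ] [DecidableEq κ] in
lemma tensorFamily_conjTranspose (A : ι → Matrix κ κ ℂ) :
    (tensorFamily A)ᴴ = tensorFamily fun i => (A i)ᴴ := by
  ext x y
  simp [Matrix.conjTranspose_apply, tensorFamily]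

omit [DecidableEq ι] [Fintype κ] in
lemma tensorFamily_diagonal (d : ι → κ → ℂ) :
    (tensorFamily fun i => Matrix.diagonal (d i)) = Matrix.diagonal fun x => ∏ i, d i (x i) := by
  ext x y
  by_cases h : x = y
  · subst h; simp [tensorFamily]
  · obtain ⟨i, hi⟩ := Function.ne_iff.mp h
    rw [Matrix.diagonal_apply_ne _ h]
    exact Finset.prod_eq_zero (Finset.mem_univ i) (Matrix.diagonal_apply_ne _ hi)

omit [DecidableEq ι] [Fintype κ] in
lemma tensorFamily_one : (tensorFamily fun _ : ι => (1 : Matrix κ κ ℂ)) = 1 := by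
  have h := tensorFamily_diagonal (fun (_ : ι) (_ : κ) => (1 : ℂ))
  simpa using h

open scoped ComplexOrder in
/-- The quadratic form of an orthogonal projector is at most the squared norm. -/
lemma re_dotProduct_mulVec_le_of_isIdempotent {Q : Matrix κ κ ℂ} (hQ : Qᴴ = Q) (hQQ : Q * Q = Q)
    (v : κ → ℂ) : (star v ⬝ᵥ Q *ᵥ v).re ≤ (star v ⬝ᵥ v).re := by
  have h : (1 - Q)ᴴ * (1 - Q) = 1 - Q := by
    rw [Matrix.conjTranspose_sub, Matrix.conjTranspose_one, hQ]
    simp [sub_mul, mul_sub, hQQ]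
  have h' := (Matrix.posSemidef_conjTranspose_mul_self (1 - Q)).re_dotProduct_nonneg v
  rw [h, Matrix.sub_mulVec, Matrix.one_mulVec, dotProduct_sub] at h'
  simpa using h'

end TensorProduct

section Born

variable {n : ℕ} (S : Finset (Fin n))

/-- The operator acting on qubit `i` in `localOp S V`. -/
noncomputable def siteOp (V : {i : Fin n // i ∈ S} → Matrix.unitaryGroup (Fin 2) ℂ) (i : Fin n) :
    Matrix (Fin 2) (Fin 2) ℂ :=
  if h : i ∈ S then (V ⟨i, h⟩ : Matrix (Fin 2) (Fin 2) ℂ) else 1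

variable (V : {i : Fin n // i ∈ S} → Matrix.unitaryGroup (Fin 2) ℂ)

lemma localOp_eq_tensorFamily :
    localOp S (fun i => (V i : Matrix (Fin 2) (Fin 2) ℂ)) = tensorFamily (siteOp S V) := by
  ext x y
  refine Finset.prod_congr rfl fun i _ => ?_
  by_cases h : i ∈ S <;> simp [siteOp, h, Matrix.one_apply]

lemma siteOp_conjTranspose_mul_self (i : Fin n) : (siteOp S V i)ᴴ * siteOp S V i = 1 := by
  by_cases h : i ∈ S
  · simpa [siteOp, h, Matrix.star_eq_conjTranspose] using
      Matrix.mem_unitaryGroup_iff'.mp (V ⟨i, h⟩).2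
  · simp [siteOp, h]

lemma projZ_eq_diagonal (z : {i : Fin n // i ∈ S} → Fin 2) :
    projZ S z = Matrix.diagonal fun x => if (fun i : {i : Fin n // i ∈ S} => x i) = z
      then 1 else 0 := by
  have h : projZ S z = tensorFamily fun i => Matrix.diagonal fun a =>
      if h : i ∈ S then (if a = z ⟨i, h⟩ then (1 : ℂ) else 0) else 1 := by
    ext x y
    refine Finset.prod_congr rfl fun i _ => ?_
    by_cases h : i ∈ S
    · simp only [h, dite_true, Matrix.diagonal_apply]
      grind
    · simp [h, Matrix.diagonal_apply]
  rw [h, tensorFamily_diagonal]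
  congr 1
  ext x
  split_ifs with hx
  · refine Finset.prod_eq_one fun i _ => ?_
    by_cases h : i ∈ S
    · simp [h, ← hx]
    · simp [h]
  · obtain ⟨i, hi⟩ := Function.ne_iff.mp hx
    refine Finset.prod_eq_zero (Finset.mem_univ i.1) ?_
    simp [i.2, hi]

variable (ψ : (Fin n → Fin 2) → ℂ)

/-- The state vector after the local unitaries have been applied. -/
noncomputable def rotated : (Fin n → Fin 2) → ℂ := tensorFamily (siteOp S V) *ᵥ ψ

lemma born_eq_sum_s8 (z : {i : Fin n // i ∈ S} → Fin 2) :
    born (Matrix.vecMulVec ψ (star ψ)) S V z =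
      ∑ x, if (fun i : {i : Fin n // i ∈ S} => x i) = z then ‖rotated S V ψ x‖ ^ 2 else 0 := by
  rw [born, localOp_eq_tensorFamily, projZ_eq_diagonal, Matrix.mul_vecMulVec,
    Matrix.vecMulVec_mul, ← Matrix.star_mulVec]
  simp only [Matrix.trace, Matrix.diag_apply, Matrix.mul_diagonal, Matrix.vecMulVec_apply,
    Complex.re_sum]
  refine Finset.sum_congr rfl fun x _ => ?_
  split_ifs
  · rw [mul_one, Pi.star_apply, Complex.star_def, Complex.mul_conj, Complex.ofReal_re,
      Complex.normSq_eq_norm_sq]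
    rfl
  · simp

lemma born_nonneg (z : {i : Fin n // i ∈ S} → Fin 2) :
    0 ≤ born (Matrix.vecMulVec ψ (star ψ)) S V z := by
  rw [born_eq_sum_s8]
  exact Finset.sum_nonneg fun x _ => by positivity

lemma sum_norm_sq_rotated (hψ : (∑ x, star (ψ x) * ψ x) = 1) :
    ∑ x, ‖rotated S V ψ x‖ ^ 2 = 1 := by
  have h : star (rotated S V ψ) ⬝ᵥ rotated S V ψ = 1 := by
    rw [rotated, Matrix.star_mulVec, Matrix.dotProduct_mulVec, Matrix.vecMul_vecMul,
      tensorFamily_conjTranspose, tensorFamily_mul]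
    simp_rw [siteOp_conjTranspose_mul_self]
    rw [tensorFamily_one, Matrix.vecMul_one]
    exact hψ
  have h' : ((∑ x, ‖rotated S V ψ x‖ ^ 2 : ℝ) : ℂ) = 1 := by
    rw [← h]
    push_cast
    exact Finset.sum_congr rfl fun x _ => (Complex.conj_mul' _).symm
  exact_mod_cast h'

lemma sum_born (hψ : (∑ x, star (ψ x) * ψ x) = 1) :
    ∑ z, born (Matrix.vecMulVec ψ (star ψ)) S V z = 1 := by
  simp_rw [born_eq_sum_s8]
  rw [Finset.sum_comm]
  simpa using sum_norm_sq_rotated S V ψ hψ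

/-- The diagonal weights detecting agreement of two copies on the qubits in `S`. -/
noncomputable def agreeWeight (i : Fin n) (w : Fin 2 × Fin 2) : ℂ :=
  if i ∈ S then (if w.1 = w.2 then 1 else 0) else 1

/-- The two-copy operator on site `i` whose expectation is the collision probability. -/
noncomputable def collisionOp (i : Fin n) : Matrix (Fin 2 × Fin 2) (Fin 2 × Fin 2) ℂ :=
  (siteOp S V i ⊗ₖ siteOp S V i)ᴴ * Matrix.diagonal (agreeWeight S i) *
    (siteOp S V i ⊗ₖ siteOp S V i)

/-- Two copies of a state vector, with the tensor factors grouped by site. -/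
def doubled (φ : (Fin n → Fin 2) → ℂ) : (Fin n → Fin 2 × Fin 2) → ℂ :=
  fun w => φ (fun i => (w i).1) * φ (fun i => (w i).2)

omit S V ψ in
lemma sum_pairs {M : Type*} [AddCommMonoid M] (f : (Fin n → Fin 2) → (Fin n → Fin 2) → M) :
    ∑ w : Fin n → Fin 2 × Fin 2, f (fun i => (w i).1) (fun i => (w i).2) = ∑ x, ∑ y, f x y := by
  rw [← Fintype.sum_prod_type']
  exact Equiv.sum_comp (Equiv.arrowProdEquivProdArrow (Fin n) (fun _ => Fin 2) (fun _ => Fin 2))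
    (fun p => f p.1 p.2)

omit S V in
lemma tensorFamily_kronecker_mulVec_doubled (A : Fin n → Matrix (Fin 2) (Fin 2) ℂ) :
    (tensorFamily fun i => A i ⊗ₖ A i) *ᵥ doubled ψ = doubled (tensorFamily A *ᵥ ψ) := by
  ext w
  simp only [Matrix.mulVec, dotProduct, doubled, tensorFamily, Matrix.kroneckerMap_apply,
    Finset.prod_mul_distrib]
  rw [Finset.sum_mul_sum, ← sum_pairs]
  exact Finset.sum_congr rfl fun _ _ => by ring

omit V ψ in
lemma prod_agreeWeight (w : Fin n → Fin 2 × Fin 2) :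
    ∏ i, agreeWeight S i (w i) =
      if (fun i : {i : Fin n // i ∈ S} => (w i).1) = (fun i : {i : Fin n // i ∈ S} => (w i).2)
      then 1 else 0 := by
  split_ifs with hw
  · refine Finset.prod_eq_one fun i _ => ?_
    by_cases h : i ∈ S
    · simpa [agreeWeight, h] using congrFun hw ⟨i, h⟩
    · simp [agreeWeight, h]
  · obtain ⟨i, hi⟩ := Function.ne_iff.mp hw
    refine Finset.prod_eq_zero (Finset.mem_univ i.1) ?_
    simp [agreeWeight, i.2, hi]

/-- The collision probability as a quadratic form in two copies of the state. -/
lemma sum_born_sq_eq_dotProduct :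
    ((∑ z, born (Matrix.vecMulVec ψ (star ψ)) S V z ^ 2 : ℝ) : ℂ) =
      star (doubled ψ) ⬝ᵥ tensorFamily (collisionOp S V) *ᵥ doubled ψ := by
  have hT : tensorFamily (collisionOp S V) =
      (tensorFamily fun i => siteOp S V i ⊗ₖ siteOp S V i)ᴴ *
        (Matrix.diagonal fun w => ∏ i, agreeWeight S i (w i)) *
        (tensorFamily fun i => siteOp S V i ⊗ₖ siteOp S V i) := by
    rw [tensorFamily_conjTranspose, ← tensorFamily_diagonal, tensorFamily_mul, tensorFamily_mul]
    rfl
  rw [hT, ← Matrix.mulVec_mulVec, ← Matrix.mulVec_mulVec, Matrix.dotProduct_mulVec,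
    ← Matrix.star_mulVec, tensorFamily_kronecker_mulVec_doubled]
  change _ = star (doubled (rotated S V ψ)) ⬝ᵥ _ *ᵥ doubled (rotated S V ψ)
  simp only [dotProduct, Matrix.mulVec_diagonal, prod_agreeWeight, Pi.star_apply, doubled]
  rw [sum_pairs fun x y => star (rotated S V ψ x * rotated S V ψ y) *
    ((if (fun i : {i : Fin n // i ∈ S} => x i) = (fun i : {i : Fin n // i ∈ S} => y i)
      then 1 else 0) * (rotated S V ψ x * rotated S V ψ y))]
  have hreal : ∑ z, born (Matrix.vecMulVec ψ (star ψ)) S V z ^ 2 =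
      ∑ x, ∑ y, if (fun i : {i : Fin n // i ∈ S} => x i) = (fun i : {i : Fin n // i ∈ S} => y i)
        then ‖rotated S V ψ x‖ ^ 2 * ‖rotated S V ψ y‖ ^ 2 else 0 := by
    simp_rw [born_eq_sum_s8, sq (∑ x, _ : ℝ), Finset.sum_mul_sum]
    rw [Finset.sum_comm]
    refine Finset.sum_congr rfl fun x _ => ?_
    rw [Finset.sum_comm]
    refine Finset.sum_congr rfl fun y _ => ?_
    simp only [ite_mul, mul_ite, zero_mul, mul_zero]
    rw [Finset.sum_ite_eq]
    simp
  rw [hreal]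
  push_cast
  refine Finset.sum_congr rfl fun x _ => Finset.sum_congr rfl fun y _ => ?_
  split_ifs
  · push_cast
    rw [← Complex.conj_mul', ← Complex.conj_mul', star_mul', Complex.star_def]
    ring
  · simp

end Born

section Expectation

variable {n : ℕ} (S : Finset (Fin n))

lemma collisionOp_of_mem (V : {i : Fin n // i ∈ S} → Matrix.unitaryGroup (Fin 2) ℂ) {i : Fin n}
    (h : i ∈ S) (w w' : Fin 2 × Fin 2) :
    collisionOp S V i w w' = ∑ z, rowMonomial z w'.1 w'.2 w.1 w.2 (V ⟨i, h⟩) := by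
  rw [collisionOp, Matrix.mul_apply]
  simp only [Matrix.mul_diagonal, Matrix.conjTranspose_apply, Matrix.kroneckerMap_apply,
    agreeWeight, h, if_true, siteOp, dite_true, rowMonomial, Fintype.sum_prod_type,
    Fin.sum_univ_two, star_mul']
  simp
  ring

lemma collisionOp_of_notMem (V : {i : Fin n // i ∈ S} → Matrix.unitaryGroup (Fin 2) ℂ)
    {i : Fin n} (h : i ∉ S) : collisionOp S V i = 1 := by
  have hd : agreeWeight S i = 1 := by ext w; simp [agreeWeight, h]
  simp [collisionOp, siteOp, h, hd]

/-- The projector onto the symmetric subspace of two qubits. -/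
noncomputable def symProj : Matrix (Fin 2 × Fin 2) (Fin 2 × Fin 2) ℂ :=
  fun w w' => ((if w = w' then 1 else 0) + (if w = w'.swap then 1 else 0)) / 2

lemma symProj_conjTranspose : symProjᴴ = symProj := by
  ext ⟨a, b⟩ ⟨c, d⟩
  fin_cases a <;> fin_cases b <;> fin_cases c <;> fin_cases d <;> simp [symProj]

lemma symProj_mul_self : symProj * symProj = symProj := by
  ext ⟨a, b⟩ ⟨c, d⟩
  fin_cases a <;> fin_cases b <;> fin_cases c <;> fin_cases d <;>
    simp [symProj, Matrix.mul_apply, Fintype.sum_prod_type, Fin.sum_univ_two] <;> norm_num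

/-- The symmetric projector on the sites in `S` and the identity elsewhere. -/
noncomputable def siteProj (i : Fin n) : Matrix (Fin 2 × Fin 2) (Fin 2 × Fin 2) ℂ :=
  if i ∈ S then symProj else 1

variable (μ : Measure (Matrix.unitaryGroup (Fin 2) ℂ)) [μ.IsHaarMeasure] [IsProbabilityMeasure μ]

lemma prod_dite_mem (f : ∀ i, i ∈ S → ℂ) (g : ∀ i, i ∉ S → ℂ) :
    (∏ i, if h : i ∈ S then f i h else g i h) =
      (∏ i : {i : Fin n // i ∈ S}, f i i.2) * ∏ i : {i : Fin n // i ∉ S}, g i i.2 := by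
  convert Fintype.prod_dite (p := fun i => i ∈ S) f g

lemma tensorFamily_collisionOp_apply (V : {i : Fin n // i ∈ S} → Matrix.unitaryGroup (Fin 2) ℂ)
    (w w' : Fin n → Fin 2 × Fin 2) :
    tensorFamily (collisionOp S V) w w' =
      (∏ i : {i : Fin n // i ∈ S}, ∑ z, rowMonomial z (w' i).1 (w' i).2 (w i).1 (w i).2 (V i)) *
        ∏ i : {i : Fin n // i ∉ S}, (1 : Matrix _ _ ℂ) (w i) (w' i) := by
  refine Eq.trans ?_ (prod_dite_mem S
    (fun i h => ∑ z, rowMonomial z (w' i).1 (w' i).2 (w i).1 (w i).2 (V ⟨i, h⟩))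
    (fun i _ => (1 : Matrix _ _ ℂ) (w i) (w' i)))
  refine Finset.prod_congr rfl fun i _ => ?_
  split_ifs with h
  · exact collisionOp_of_mem S V h _ _
  · rw [collisionOp_of_notMem S V h]

omit [μ.IsHaarMeasure] in
lemma integrable_tensorFamily_collisionOp (w w' : Fin n → Fin 2 × Fin 2) :
    Integrable (fun V => tensorFamily (collisionOp S V) w w')
      (Measure.pi fun _ : {i : Fin n // i ∈ S} => μ) := by
  simp_rw [tensorFamily_collisionOp_apply]
  refine Integrable.mul_const (Integrable.fintype_prod (f := fun (i : {i : Fin n // i ∈ S}) U =>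
    ∑ z, rowMonomial z (w' i).1 (w' i).2 (w i).1 (w i).2 U) fun i => ?_) _
  exact integrable_finsetSum _ fun z _ => integrable_rowMonomial μ ..

/-- The averaged collision operator is `(2/3)^|S|` times the product of symmetric projectors. -/
lemma integral_tensorFamily_collisionOp (w w' : Fin n → Fin 2 × Fin 2) :
    ∫ V, tensorFamily (collisionOp S V) w w' ∂(Measure.pi fun _ : {i : Fin n // i ∈ S} => μ) =
      (2 / 3) ^ S.card * tensorFamily (siteProj S) w w' := by
  simp_rw [tensorFamily_collisionOp_apply]
  rw [integral_mul_const, integral_fintype_prod_eq_prod (fun (i : {i : Fin n // i ∈ S}) U =>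
    ∑ z, rowMonomial z (w' i).1 (w' i).2 (w i).1 (w i).2 U)]
  have hsite : ∀ i : {i : Fin n // i ∈ S},
      ∫ U, ∑ z, rowMonomial z (w' i).1 (w' i).2 (w i).1 (w i).2 U ∂μ =
        2 / 3 * symProj (w i) (w' i) := by
    intro i
    rw [integral_finsetSum _ fun z _ => integrable_rowMonomial μ ..]
    simp_rw [integral_rowMonomial, symProj, Prod.ext_iff, Fin.sum_univ_two, Prod.fst_swap,
      Prod.snd_swap, eq_comm (a := (w i).1), eq_comm (a := (w i).2),
      and_comm (a := (w' i).2 = (w i).1)]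
    ring
  simp_rw [hsite]
  rw [Finset.prod_mul_distrib, Finset.prod_const, Finset.card_univ, Fintype.card_coe, mul_assoc]
  refine congrArg _ (Eq.trans (prod_dite_mem S
    (fun i _ => symProj (w i) (w' i)) (fun i _ => (1 : Matrix _ _ ℂ) (w i) (w' i))).symm ?_)
  refine Finset.prod_congr rfl fun i _ => ?_
  by_cases h : i ∈ S <;> simp [siteProj, h]

variable (ψ : (Fin n → Fin 2) → ℂ)

lemma integral_sum_born_sq :
    ((∫ V, ∑ z, born (Matrix.vecMulVec ψ (star ψ)) S V z ^ 2
        ∂(Measure.pi fun _ : {i : Fin n // i ∈ S} => μ) : ℝ) : ℂ) =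
      (2 / 3) ^ S.card * (star (doubled ψ) ⬝ᵥ tensorFamily (siteProj S) *ᵥ doubled ψ) := by
  rw [← integral_complex_ofReal]
  simp_rw [sum_born_sq_eq_dotProduct, dotProduct, Matrix.mulVec, dotProduct]
  have hi := fun w w' => (integrable_tensorFamily_collisionOp S μ w w').mul_const (doubled ψ w')
  rw [integral_finsetSum _ fun w _ =>
    (integrable_finsetSum _ fun w' _ => hi w w').const_mul _, Finset.mul_sum]
  refine Finset.sum_congr rfl fun w _ => ?_
  rw [integral_const_mul, integral_finsetSum _ fun w' _ => hi w w', mul_left_comm]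
  simp_rw [integral_mul_const, integral_tensorFamily_collisionOp, mul_assoc, ← Finset.mul_sum]

lemma star_doubled_dotProduct_doubled (hψ : (∑ x, star (ψ x) * ψ x) = 1) :
    star (doubled ψ) ⬝ᵥ doubled ψ = 1 := by
  simp only [dotProduct, Pi.star_apply, doubled]
  rw [sum_pairs fun x y => star (ψ x * ψ y) * (ψ x * ψ y)]
  calc _ = (∑ x, star (ψ x) * ψ x) * ∑ y, star (ψ y) * ψ y := by
        rw [Finset.sum_mul_sum]
        refine Finset.sum_congr rfl fun x _ => Finset.sum_congr rfl fun y _ => ?_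
        rw [star_mul']
        ring
    _ = 1 := by rw [hψ, one_mul]

/-- The averaged collision probability is at most `(2/3)^|S|`. -/
lemma integral_sum_born_sq_le (hψ : (∑ x, star (ψ x) * ψ x) = 1) :
    ∫ V, ∑ z, born (Matrix.vecMulVec ψ (star ψ)) S V z ^ 2
        ∂(Measure.pi fun _ : {i : Fin n // i ∈ S} => μ) ≤ (2 / 3 : ℝ) ^ S.card := by
  have h := congrArg Complex.re (integral_sum_born_sq S μ ψ)
  rw [show ((2 / 3 : ℂ) ^ S.card) = (((2 / 3 : ℝ) ^ S.card : ℝ) : ℂ) by push_cast; rfl,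
    Complex.re_ofReal_mul, Complex.ofReal_re] at h
  rw [h]
  refine mul_le_of_le_one_right (by positivity) ?_
  refine (re_dotProduct_mulVec_le_of_isIdempotent ?_ ?_ _).trans ?_
  · rw [tensorFamily_conjTranspose]
    congr 1
    ext1 i
    by_cases hi : i ∈ S <;> simp [siteProj, hi, symProj_conjTranspose]
  · rw [tensorFamily_mul]
    congr 1
    ext1 i
    by_cases hi : i ∈ S <;> simp [siteProj, hi, symProj_mul_self]
  · rw [star_doubled_dotProduct_doubled ψ hψ, Complex.one_re]

end Expectation

section JointLaw

variable {n : ℕ} (S : Finset (Fin n)) (ψ : (Fin n → Fin 2) → ℂ)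

lemma measurable_born (z : {i : Fin n // i ∈ S} → Fin 2) :
    Measurable fun V => born (Matrix.vecMulVec ψ (star ψ)) S V z := by
  have hsite : ∀ i a b, Measurable fun V => siteOp S V i a b := by
    intro i a b
    by_cases h : i ∈ S
    · simp only [siteOp, h, dite_true]
      exact (continuous_unitaryGroup_apply a b).measurable.comp (measurable_pi_apply _)
    · simp only [siteOp, h, dite_false]
      exact measurable_const
  simp_rw [born_eq_sum_s8]
  refine Finset.measurable_sum _ fun x _ => ?_
  split_ifs
  · refine Measurable.pow_const (Measurable.norm ?_) 2
    simp only [rotated, Matrix.mulVec, dotProduct, tensorFamily]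
    exact Finset.measurable_sum _ fun y _ =>
      (Finset.measurable_prod _ fun i _ => hsite i _ _).mul_const _
  · exact measurable_const

lemma isProbabilityMeasure_bornMeasure (hψ : (∑ x, star (ψ x) * ψ x) = 1)
    (V : {i : Fin n // i ∈ S} → Matrix.unitaryGroup (Fin 2) ℂ) :
    IsProbabilityMeasure (bornMeasure (Matrix.vecMulVec ψ (star ψ)) S V) := by
  constructor
  simp only [bornMeasure, Measure.coe_finsetSum, Finset.sum_apply, Measure.smul_apply,
    measure_univ, smul_eq_mul, mul_one]
  rw [← ENNReal.ofReal_sum_of_nonneg fun z _ => born_nonneg S V ψ z, sum_born S V ψ hψ,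
    ENNReal.ofReal_one]

lemma bornMeasure_singleton (V : {i : Fin n // i ∈ S} → Matrix.unitaryGroup (Fin 2) ℂ)
    (z : {i : Fin n // i ∈ S} → Fin 2) :
    bornMeasure (Matrix.vecMulVec ψ (star ψ)) S V {z} =
      ENNReal.ofReal (born (Matrix.vecMulVec ψ (star ψ)) S V z) := by
  simp [bornMeasure, Measure.coe_finsetSum, Finset.sum_apply, Set.indicator_apply]

/-- The outcomes of one round, as a finite sum of point masses. -/
lemma map_pi_bornMeasure_apply (hψ : (∑ x, star (ψ x) * ψ x) = 1) (K : ℕ)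
    (V : {i : Fin n // i ∈ S} → Matrix.unitaryGroup (Fin 2) ℂ)
    {A : Set (({i : Fin n // i ∈ S} → Matrix.unitaryGroup (Fin 2) ℂ) ×
      (Fin K → ({i : Fin n // i ∈ S} → Fin 2)))} (hA : MeasurableSet A) :
    ((Measure.pi fun _ : Fin K => bornMeasure (Matrix.vecMulVec ψ (star ψ)) S V).map
      (Prod.mk V)) A = ∑ ζ : Fin K → ({i : Fin n // i ∈ S} → Fin 2),
        (Prod.mk V ⁻¹' A).indicator
          (fun ζ => ∏ k, ENNReal.ofReal (born (Matrix.vecMulVec ψ (star ψ)) S V (ζ k))) ζ := by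
  have := isProbabilityMeasure_bornMeasure S ψ hψ V
  classical
  rw [Measure.map_apply measurable_prodMk_left hA]
  have hset : Prod.mk V ⁻¹' A = (Finset.univ.filter fun ζ => ζ ∈ Prod.mk V ⁻¹' A : Set _) := by
    ext; simp
  conv_lhs => rw [hset]
  rw [← sum_measure_singleton, Finset.sum_filter]
  refine Finset.sum_congr rfl fun ζ _ => ?_
  rw [Set.indicator_apply, Measure.pi_singleton]
  simp_rw [bornMeasure_singleton]

lemma measurable_map_pi_bornMeasure (hψ : (∑ x, star (ψ x) * ψ x) = 1) (K : ℕ) :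
    Measurable fun V => (Measure.pi fun _ : Fin K =>
      bornMeasure (Matrix.vecMulVec ψ (star ψ)) S V).map (Prod.mk V) := by
  refine Measure.measurable_of_measurable_coe _ fun A hA => ?_
  simp_rw [map_pi_bornMeasure_apply S ψ hψ K _ hA]
  refine Finset.measurable_sum _ fun ζ _ => ?_
  exact Measurable.indicator (s := (fun V => (V, ζ)) ⁻¹' A)
    (Finset.measurable_prod _ fun k _ => (measurable_born S ψ (ζ k)).ennreal_ofReal)
    (measurable_prodMk_right hA)

variable (μ : Measure (Matrix.unitaryGroup (Fin 2) ℂ)) [IsProbabilityMeasure μ]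

lemma isProbabilityMeasure_jointRound (hψ : (∑ x, star (ψ x) * ψ x) = 1) (K : ℕ) :
    IsProbabilityMeasure (jointRound μ (Matrix.vecMulVec ψ (star ψ)) S K) := by
  constructor
  rw [jointRound, Measure.bind_apply .univ (measurable_map_pi_bornMeasure S ψ hψ K).aemeasurable]
  have h : ∀ V, ((Measure.pi fun _ : Fin K => bornMeasure (Matrix.vecMulVec ψ (star ψ)) S V).map
      (Prod.mk V)) Set.univ = 1 := by
    intro V
    have := isProbabilityMeasure_bornMeasure S ψ hψ V
    rw [Measure.map_apply measurable_prodMk_left .univ, Set.preimage_univ, measure_univ]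
  simp [h]

/-- The event that the two outcomes of a round agree. -/
def collisionEvent : Set (({i : Fin n // i ∈ S} → Matrix.unitaryGroup (Fin 2) ℂ) ×
    (Fin 2 → ({i : Fin n // i ∈ S} → Fin 2))) := {ω | ω.2 0 = ω.2 1}

lemma measurableSet_collisionEvent : MeasurableSet (collisionEvent S) :=
  measurableSet_eq_fun ((measurable_pi_apply 0).comp measurable_snd)
    ((measurable_pi_apply 1).comp measurable_snd)

omit [IsProbabilityMeasure μ] in
lemma jointRound_collisionEvent (hψ : (∑ x, star (ψ x) * ψ x) = 1) :
    (jointRound μ (Matrix.vecMulVec ψ (star ψ)) S 2).real (collisionEvent S) =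
      ∫ V, ∑ z, born (Matrix.vecMulVec ψ (star ψ)) S V z ^ 2
        ∂(Measure.pi fun _ : {i : Fin n // i ∈ S} => μ) := by
  have hA := measurableSet_collisionEvent S
  rw [integral_eq_lintegral_of_nonneg_ae (.of_forall fun V => by positivity)
    (Finset.measurable_sum _ fun z _ => (measurable_born S ψ z).pow_const 2).aestronglyMeasurable,
    Measure.real, jointRound, Measure.bind_apply hA
      (measurable_map_pi_bornMeasure S ψ hψ 2).aemeasurable]
  congr 1
  refine lintegral_congr fun V => ?_
  rw [map_pi_bornMeasure_apply S ψ hψ 2 V hA,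
    ← (finTwoArrowEquiv ({i : Fin n // i ∈ S} → Fin 2)).symm.sum_comp, Fintype.sum_prod_type,
    ENNReal.ofReal_sum_of_nonneg fun z _ => sq_nonneg _]
  refine Finset.sum_congr rfl fun z _ => ?_
  simp [Set.indicator_apply, collisionEvent, Fin.prod_univ_two,
    ENNReal.ofReal_mul (born_nonneg S V ψ z), sq]

end JointLaw

/-- The variance of an indicator function. -/
lemma variance_indicator_one {Ω : Type*} [MeasurableSpace Ω] (P : Measure Ω)
    [IsProbabilityMeasure P] {A : Set Ω} (hA : MeasurableSet A) :
    ProbabilityTheory.variance (A.indicator 1) P = P.real A * (1 - P.real A) := by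
  have hL : MemLp (A.indicator (1 : Ω → ℝ)) 2 P := (memLp_const (1 : ℝ)).indicator hA
  rw [ProbabilityTheory.variance_eq_sub hL]
  have hsq : (A.indicator (1 : Ω → ℝ)) ^ 2 = A.indicator 1 := by
    ext ω
    by_cases h : ω ∈ A <;> simp [h]
  rw [hsq, integral_indicator_one hA]
  ring

/-- `P₂ ≤ (2/3)^s`, and the single-unitary `K = 2` estimator
`Ĉ^{(2)} = 1 - (3/2)^s 1{Z₁ = Z₂}` has variance `(9/4)^s P₂(1−P₂) ≤ (3/2)^s`. -/
theorem LRM_K2_variance_bound (n : ℕ) (ψ : (Fin n → Fin 2) → ℂ)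
    (hψ : (∑ x, star (ψ x) * ψ x) = 1)
    (S : Finset (Fin n)) (hS : S.Nonempty)
    (μ : Measure (Matrix.unitaryGroup (Fin 2) ℂ)) [μ.IsHaarMeasure] [IsProbabilityMeasure μ]
    (P2 : ℝ)
    (hP2 : P2 = ∫ V : ({i : Fin n // i ∈ S} → Matrix.unitaryGroup (Fin 2) ℂ),
        (∑ z : ({i : Fin n // i ∈ S} → Fin 2), (born (Matrix.vecMulVec ψ (star ψ)) S V z) ^ 2)
        ∂(Measure.pi fun _ : {i : Fin n // i ∈ S} => μ)) :
    P2 ≤ (2 / 3 : ℝ) ^ S.card ∧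
    ProbabilityTheory.variance
        (fun ω => 1 - (3 / 2 : ℝ) ^ S.card * (if ω.2 0 = ω.2 1 then 1 else 0))
        (jointRound μ (Matrix.vecMulVec ψ (star ψ)) S 2)
      = (9 / 4 : ℝ) ^ S.card * (P2 * (1 - P2)) ∧
    ProbabilityTheory.variance
        (fun ω => 1 - (3 / 2 : ℝ) ^ S.card * (if ω.2 0 = ω.2 1 then 1 else 0))
        (jointRound μ (Matrix.vecMulVec ψ (star ψ)) S 2)
      ≤ (3 / 2 : ℝ) ^ S.card := by
  have hprob := isProbabilityMeasure_jointRound S ψ μ hψ 2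
  have hA := measurableSet_collisionEvent S
  have hle : P2 ≤ (2 / 3 : ℝ) ^ S.card := hP2 ▸ integral_sum_born_sq_le S μ ψ hψ
  have hnonneg : 0 ≤ P2 := hP2 ▸ integral_nonneg fun V => by positivity
  have hvar : ProbabilityTheory.variance
      (fun ω => 1 - (3 / 2 : ℝ) ^ S.card * (if ω.2 0 = ω.2 1 then 1 else 0))
      (jointRound μ (Matrix.vecMulVec ψ (star ψ)) S 2)
      = (9 / 4 : ℝ) ^ S.card * (P2 * (1 - P2)) := by
    have hfun : (fun ω : ({i : Fin n // i ∈ S} → Matrix.unitaryGroup (Fin 2) ℂ) ×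
        (Fin 2 → ({i : Fin n // i ∈ S} → Fin 2)) =>
          1 - (3 / 2 : ℝ) ^ S.card * (if ω.2 0 = ω.2 1 then 1 else 0)) =
        fun ω => 1 - (3 / 2 : ℝ) ^ S.card * (collisionEvent S).indicator 1 ω := by
      ext ω
      simp [Set.indicator_apply, collisionEvent]
    rw [hfun, ProbabilityTheory.variance_const_sub
        ((measurable_one.indicator hA).const_mul _).aestronglyMeasurable,
      ProbabilityTheory.variance_const_mul, variance_indicator_one _ hA,
      jointRound_collisionEvent S ψ μ hψ, ← hP2, ← pow_mul, mul_comm S.card 2, pow_mul]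
    norm_num
  refine ⟨hle, hvar, hvar.trans_le ?_⟩
  calc (9 / 4 : ℝ) ^ S.card * (P2 * (1 - P2))
      ≤ (9 / 4 : ℝ) ^ S.card * (2 / 3 : ℝ) ^ S.card := by
        gcongr
        nlinarith
    _ = (3 / 2 : ℝ) ^ S.card := by
        rw [← mul_pow]
        norm_num
end
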